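/- Let n ≥ 2 and let λ_1, …, λ_N ∈ sl_n(ℂ) be nonzero diagonalizable traceless matrices, each having exactly two distinct eigenvalues, and assume the smaller of the two eigenvalue multiplicities equals the same integer m for every λ_i. Let Z ⊆ sl_n(ℂ) be a Zariski-closed subset stable under conjugation by GL_n(ℂ) and under multiplication by complex scalars, such that: (i) every diagonalizable element of Z has the form t·g·λ_i·g⁻¹ for some index i, some t ∈ ℂ and some g ∈ GL_n(ℂ); and (ii) every nilpotent element X of Z satisfies X² = 0 and rank X ≤ m. Then every element of Z is either conjugate to a scalar multiple of some λ_i or is nilpotent with X² = 0 and rank X ≤ m; equivalently, Z is contained in the union over i of the Zariski closures of the cones {t·g·λ_i·g⁻¹ : t ∈ ℂ∖{0}, g ∈ GL_n(ℂ)}. -/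

import Mathlib

open Matrix

noncomputable section

abbrev Mat (n : ℕ) := Matrix (Fin n) (Fin n) ℂ

abbrev GLn (n : ℕ) := Matrix.GeneralLinearGroup (Fin n) ℂ

/-- A subset of the space of `n×n` complex matrices is Zariski closed if it is the
common zero locus of a family of polynomials in the matrix entries. -/
def zclosed {n : ℕ} (S : Set (Mat n)) : Prop :=
  ∃ T : Set (MvPolynomial (Fin n × Fin n) ℂ),
    S = {X | ∀ p ∈ T, MvPolynomial.eval (fun q => X q.1 q.2) p = 0}

/-- The Zariski closure of a set of matrices. -/
def zclosure {n : ℕ} (S : Set (Mat n)) : Set (Mat n) :=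
  ⋂₀ {C | zclosed C ∧ S ⊆ C}

/-!
Let `Z` be a closed cone of matrices stable under conjugation. If `w, X w, …, X ^ r w` are linearly
independent for some `X ∈ Z`, grade the space so that `X ^ i w` has degree `r - i` and `X` has only
components of degree at least `-1`. Conjugating by `diag (c ^ k)`, rescaling by `c` and letting `c`
tend to `0` isolates the component of degree `-1`: a nilpotent `Y ∈ Z` with `Y ^ r ≠ 0`. So if all
nilpotents of `Z` square to zero, minimal polynomials of elements of `Z` have degree at most `2`,
and a traceless element is diagonalizable or nilpotent.

Conversely, let `X ^ 2 = 0`, with the rank of `X` at most both multiplicities of a matrix with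
eigenvalues `a ≠ b`. Then this matrix has a conjugate `M` whose `a`-eigenspace lies between the
range and the kernel of `X`. A unipotent `1 + s • X` conjugates `M` to `M + c⁻¹ • X`, and
`c • M + X` tends to `X` as `c` tends to `0`.
-/

open Module Topology

section CyclicVectors

open Polynomial

variable {K V : Type*} [Field K] [AddCommGroup V] [Module K V] [FiniteDimensional K V]

theorem exists_forall_minpoly_dvd_of_aeval_apply_eq_zero [Infinite K] (f : End K V) :
    ∃ w : V, ∀ p : K[X], aeval f p w = 0 → minpoly K f ∣ p := by
  classical
  have hμ : minpoly K f ≠ 0 := minpoly.ne_zero (Algebra.IsIntegral.isIntegral f)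
  have : Finite {q : K[X] // q.Monic ∧ q ∣ minpoly K f} :=
    (Polynomial.fintypeSubtypeMonicDvd _ hμ).finite
  -- `w` avoids the kernels of `q(f)` for the finitely many proper monic divisors `q` of `minpoly`.
  obtain ⟨w, hw⟩ := Submodule.exists_forall_notMem_of_forall_ne_top
    (fun q : {q : {q : K[X] // q.Monic ∧ q ∣ minpoly K f} // ¬ minpoly K f ∣ q} ↦
      LinearMap.ker (aeval f (q : K[X])))
    fun q hq ↦ q.2 (minpoly.dvd K f (LinearMap.ker_eq_top.mp hq))
  refine ⟨w, fun p hp ↦ ?_⟩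
  let d := gcd p (minpoly K f)
  have hd : aeval f d w = 0 := by
    obtain ⟨a, b, hab⟩ := exists_gcd_eq_mul_add_mul p (minpoly K f)
    simp [d, hab, mul_comm p a, mul_comm _ b, hp]
  by_contra hdvd
  have hnorm : normalize d = d := normalize_gcd _ _
  have hmonic : d.Monic := hnorm ▸ monic_normalize (gcd_ne_zero_of_right hμ)
  exact hw ⟨⟨d, hmonic, gcd_dvd_right _ _⟩, fun h ↦ hdvd (h.trans (gcd_dvd_left _ _))⟩ hd

theorem exists_linearIndependent_pow_apply [Infinite K] (f : End K V) :
    ∃ w : V, LinearIndependent K fun i : Fin (minpoly K f).natDegree ↦ (f ^ (i : ℕ)) w := by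
  obtain ⟨w, hw⟩ := exists_forall_minpoly_dvd_of_aeval_apply_eq_zero f
  refine ⟨w, Fintype.linearIndependent_iff.mpr fun c hc ↦
    Fintype.linearIndependent_iff.mp (linearIndependent_pow f) c ?_⟩
  have hsum : aeval f (∑ i : Fin (minpoly K f).natDegree, c i • (X : K[X]) ^ (i : ℕ)) =
      ∑ i : Fin (minpoly K f).natDegree, c i • f ^ (i : ℕ) := by simp
  rw [← hsum, ← minpoly.dvd_iff]
  exact hw _ (by simpa [hsum] using hc)

theorem isSemisimple_or_isNilpotent_sub_algebraMap {f : End K V}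
    (hf : (minpoly K f).natDegree ≤ 2) :
    f.IsSemisimple ∨ ∃ a : K, IsNilpotent (f - algebraMap K (End K V) a) := by
  have hμ : (minpoly K f).Monic := minpoly.monic (Algebra.IsIntegral.isIntegral f)
  by_cases hsq : Squarefree (minpoly K f)
  · exact .inl (End.isSemisimple_of_squarefree_aeval_eq_zero hsq (minpoly.aeval K f))
  obtain ⟨d, ⟨e, he⟩, hunit⟩ : ∃ d, d * d ∣ minpoly K f ∧ ¬ IsUnit d := by
    simpa [Squarefree] using hsq
  have hde : d * d * e ≠ 0 := he ▸ hμ.ne_zero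
  have hd0 : d ≠ 0 := by rintro rfl; simp at hde
  have he0 : e ≠ 0 := right_ne_zero_of_mul hde
  have hdpos : 0 < d.natDegree :=
    natDegree_pos_iff_degree_pos.mpr (degree_pos_of_ne_zero_of_nonunit hd0 hunit)
  have hdeg : d.natDegree + d.natDegree + e.natDegree ≤ 2 := by
    rwa [he, natDegree_mul (mul_ne_zero hd0 hd0) he0, natDegree_mul hd0 hd0] at hf
  obtain ⟨a, ha⟩ := exists_root_of_degree_eq_one
    ((degree_eq_iff_natDegree_eq hd0).mpr (by omega : d.natDegree = 1))
  have hdvd : (X - C a) ^ 2 ∣ minpoly K f :=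
    he ▸ (sq (X - C a) ▸ mul_dvd_mul (dvd_iff_isRoot.mpr ha) (dvd_iff_isRoot.mpr ha)).mul_right e
  have heq : minpoly K f = (X - C a) ^ 2 :=
    eq_of_monic_of_dvd_of_natDegree_le ((monic_X_sub_C a).pow 2) hμ hdvd (by simpa using hf)
  exact .inr ⟨a, 2, by simpa [heq] using minpoly.aeval K f⟩

end CyclicVectors

section ChangeOfBasis

variable {K ι V : Type*} [Field K] [AddCommGroup V] [Module K V]

theorem exists_basis_extending {α : Type*} (c : Basis ι K V)
    {v : α → V} (hv : LinearIndependent K v) :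
    ∃ (b : Basis ι K V) (e : α → ι), Function.Injective e ∧ ∀ i, b (e i) = v i := by
  let σ := (Basis.sumExtend hv).indexEquiv c
  refine ⟨(Basis.sumExtend hv).reindex σ, fun i ↦ σ (.inl i),
    σ.injective.comp Sum.inl_injective, fun i ↦ ?_⟩
  simp only [Basis.sumExtend, Equiv.trans_def, Basis.coe_reindex, Basis.coe_extend,
    Function.comp_apply, Equiv.symm_apply_apply, σ]
  rfl

theorem exists_basis_apply_eq_smul [Finite ι] [IsAlgClosed K] (c : Basis ι K V)
    {f : End K V} (hf : f.IsSemisimple) :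
    ∃ (b : Basis ι K V) (d : ι → K), ∀ i, f (b i) = d i • b i := by
  have : FiniteDimensional K V := .of_basis c
  have hspan : ⊤ ≤ Submodule.span K (⋃ μ, (f.eigenspace μ : Set V)) := by
    rw [← Submodule.iSup_eq_span, hf.iSup_eigenspace_eq_top]
  let b := Basis.ofSpan hspan
  let σ := b.indexEquiv c
  have heig (i) : ∃ μ : K, f (b i) = μ • b i := by
    obtain ⟨μ, hμ⟩ := Set.mem_iUnion.mp (Basis.ofSpan_subset hspan (Set.mem_range_self i))
    exact ⟨μ, End.mem_eigenspace_iff.mp hμ⟩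
  choose d hd using heig
  exact ⟨b.reindex σ, d ∘ σ.symm, fun i ↦ by simp [hd]⟩

variable [Fintype ι] [DecidableEq ι]

theorem exists_conj_toMatrix_eq {R : Type*} [CommRing R] (b : Basis ι R (ι → R)) :
    ∃ g : GL ι R, ∀ X : Matrix ι ι R,
      X = (g : Matrix ι ι R) * LinearMap.toMatrix b b X.toLin' * (↑g⁻¹ : Matrix ι ι R) := by
  refine ⟨⟨(Pi.basisFun R ι).toMatrix b, b.toMatrix (Pi.basisFun R ι),
    Basis.toMatrix_mul_toMatrix_flip _ _, Basis.toMatrix_mul_toMatrix_flip _ _⟩, fun X ↦ ?_⟩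
  exact ((basis_toMatrix_mul_linearMap_toMatrix_mul_basis_toMatrix ..).trans
    (LinearMap.toMatrix'_toLin' X)).symm

theorem exists_conj_diagonal_of_isSemisimple [IsAlgClosed K] {X : Matrix ι ι K}
    (hX : End.IsSemisimple X.toLin') :
    ∃ (g : GL ι K) (d : ι → K), X = (g : Matrix ι ι K) * diagonal d * (↑g⁻¹ : Matrix ι ι K) := by
  obtain ⟨b, d, hb⟩ := exists_basis_apply_eq_smul (Pi.basisFun K ι) hX
  obtain ⟨g, hg⟩ := exists_conj_toMatrix_eq b
  have hdiag : LinearMap.toMatrix b b X.toLin' = diagonal d := by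
    ext i j
    simp only [LinearMap.toMatrix_apply, hb, map_smul, Basis.repr_self,
      Finsupp.smul_apply, Finsupp.single_apply, smul_eq_mul, diagonal_apply]
    grind
  exact ⟨g, d, hdiag ▸ hg X⟩

end ChangeOfBasis

theorem apply_zero_mem_closure {R E : Type*} [Zero R] [TopologicalSpace R]
    [(𝓝[≠] (0 : R)).NeBot] [TopologicalSpace E] {Z : Set E} {γ : R → E} (hγ : Continuous γ)
    (hmem : ∀ c ≠ 0, γ c ∈ Z) : γ 0 ∈ closure Z :=
  have hlim : Filter.Tendsto γ (𝓝[≠] 0) (𝓝 (γ 0)) := hγ.continuousWithinAt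
  mem_closure_of_tendsto hlim (Filter.eventually_of_mem self_mem_nhdsWithin hmem)

section Grading

variable {R ι : Type*} [Semiring R]

/-- For the grading of `ι → R` that puts the `i`-th basis vector in degree `k i`, the component
of `B` of degree `-1`. -/
def shiftPart (k : ι → ℕ) (B : Matrix ι ι R) : Matrix ι ι R :=
  of fun i j ↦ if k j = k i + 1 then B i j else 0

theorem shiftPart_apply (k : ι → ℕ) (B : Matrix ι ι R) (i j : ι) :
    shiftPart k B i j = if k j = k i + 1 then B i j else 0 := rfl

variable [Fintype ι] [DecidableEq ι]

theorem isNilpotent_shiftPart (k : ι → ℕ) (B : Matrix ι ι R) : IsNilpotent (shiftPart k B) := by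
  have hdegree (s : ℕ) : ∀ i j, (shiftPart k B ^ s) i j ≠ 0 → k j = k i + s := by
    induction s with
    | zero =>
      intro i j hij
      obtain rfl : i = j := by
        by_contra h
        simp [h] at hij
      rfl
    | succ s ih =>
      intro i j hij
      rw [pow_succ, mul_apply] at hij
      obtain ⟨l, -, hl⟩ := Finset.exists_ne_zero_of_sum_ne_zero hij
      have hil := ih i l (left_ne_zero_of_mul hl)
      have hlj : k j = k l + 1 := by
        by_contra h
        simp [shiftPart_apply, h] at hl
      omega
  refine ⟨Finset.univ.sup k + 1, ?_⟩
  ext i j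
  by_contra hij
  have hj : k j ≤ Finset.univ.sup k := Finset.le_sup (Finset.mem_univ j)
  have := hdegree _ i j hij
  omega

theorem pow_ne_zero_of_mulVec_eq_succ {r : ℕ} {Y : Matrix ι ι R} {v : Fin (r + 1) → ι → R}
    (hY : ∀ s : Fin r, Y *ᵥ v s.castSucc = v s.succ) (hv : v (Fin.last r) ≠ 0) : Y ^ r ≠ 0 := by
  intro hzero
  have hpow (s : Fin (r + 1)) : Y ^ (s : ℕ) *ᵥ v 0 = v s := by
    induction s using Fin.induction with
    | zero => simp
    | succ s ih => rw [Fin.val_succ, pow_succ', ← mulVec_mulVec, ← Fin.val_castSucc, ih, hY]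
  exact hv (by simpa [hzero] using (hpow (Fin.last r)).symm)

end Grading

section Cones

variable {K ι : Type*} [Fintype ι] [DecidableEq ι]

/-- A set of matrices stable under conjugation by invertible matrices and under all scalars. -/
structure IsConjInvariantCone [CommRing K] (Z : Set (Matrix ι ι K)) : Prop where
  conj_mem (g : GL ι K) {X : Matrix ι ι K} :
    X ∈ Z → (g : Matrix ι ι K) * X * (↑g⁻¹ : Matrix ι ι K) ∈ Z
  smul_mem (c : K) {X : Matrix ι ι K} : X ∈ Z → c • X ∈ Z

variable [Field K]

theorem IsConjInvariantCone.toMatrix_mem {Z : Set (Matrix ι ι K)} (hZ : IsConjInvariantCone Z)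
    (b : Basis ι K (ι → K)) {X : Matrix ι ι K} (hX : X ∈ Z) :
    LinearMap.toMatrix b b X.toLin' ∈ Z := by
  obtain ⟨g, hg⟩ := exists_conj_toMatrix_eq b
  have hmem := hZ.conj_mem g⁻¹ hX
  rw [hg X] at hmem
  simpa [mul_assoc] using hmem

section Topology

variable [TopologicalSpace K] [IsTopologicalRing K] [(𝓝[≠] (0 : K)).NeBot] {Z : Set (Matrix ι ι K)}

theorem IsConjInvariantCone.shiftPart_mem (hZ : IsConjInvariantCone Z) (hclosed : IsClosed Z)
    (k : ι → ℕ) {B : Matrix ι ι K} (hB : B ∈ Z) (hk : ∀ i j, B i j ≠ 0 → k j ≤ k i + 1) :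
    shiftPart k B ∈ Z := by
  let γ (c : K) : Matrix ι ι K := of fun i j ↦ c ^ (k i + 1 - k j) * B i j
  have hγ : Continuous γ := by
    unfold γ
    fun_prop
  have hγ0 : γ 0 = shiftPart k B := by
    ext i j
    have := hk i j
    simp only [γ, of_apply, shiftPart_apply, zero_pow_eq]
    grind
  refine hγ0 ▸ hclosed.closure_subset (apply_zero_mem_closure hγ fun c hc ↦ ?_)
  let g : GL ι K := ⟨diagonal fun i ↦ c ^ k i, diagonal fun i ↦ (c ^ k i)⁻¹,
    by simp [hc], by simp [hc]⟩
  have hconj : γ c = c • ((g : Matrix ι ι K) * B * (↑g⁻¹ : Matrix ι ι K)) := by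
    ext i j
    change c ^ (k i + 1 - k j) * B i j =
      c * (diagonal (fun i ↦ c ^ k i) * B * diagonal (fun i ↦ (c ^ k i)⁻¹)) i j
    rw [mul_diagonal, diagonal_mul]
    by_cases hij : B i j = 0
    · simp [hij]
    rw [pow_sub₀ c hc (hk i j hij)]
    ring
  exact hconj ▸ hZ.smul_mem c (hZ.conj_mem g hB)

theorem IsConjInvariantCone.exists_isNilpotent_pow_ne_zero (hZ : IsConjInvariantCone Z)
    (hclosed : IsClosed Z) {r : ℕ} {X : Matrix ι ι K} (hX : X ∈ Z) {w : ι → K}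
    (hw : LinearIndependent K fun i : Fin (r + 1) ↦ (X.toLin' ^ (i : ℕ)) w) :
    ∃ Y ∈ Z, IsNilpotent Y ∧ Y ^ r ≠ 0 := by
  obtain ⟨b, e, he, hb⟩ := exists_basis_extending (Pi.basisFun K ι) hw
  let B : Matrix ι ι K := LinearMap.toMatrix b b X.toLin'
  -- `X ^ i w` sits in degree `r - i` and the complementary basis vectors in degree `0`.
  let k : ι → ℕ := Function.extend e (fun i ↦ r - i) 0
  have hke (i : Fin (r + 1)) : k (e i) = r - i := he.extend_apply ..
  have hk_notMem {j : ι} (hj : j ∉ Set.range e) : k j = 0 := Function.extend_apply' _ _ _ hj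
  have hBe (s : Fin r) (i : ι) :
      B i (e s.castSucc) = (Pi.single (e s.succ) 1 : ι → K) i := by
    have hstep : X.toLin' (b (e s.castSucc)) = b (e s.succ) := by
      simp only [hb, Fin.val_castSucc, Fin.val_succ, pow_succ', Module.End.mul_apply]
    rw [show B i _ = _ from LinearMap.toMatrix_apply .., hstep, b.repr_self,
      Finsupp.single_eq_pi_single]
  have hk (i j : ι) (hij : B i j ≠ 0) : k j ≤ k i + 1 := by
    by_cases hj : j ∈ Set.range e
    · obtain ⟨s, rfl⟩ := hj
      induction s using Fin.lastCases with
      | last => simp [hke]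
      | cast s =>
        obtain rfl : i = e s.succ := by
          by_contra h
          simp [hBe, h] at hij
        simp only [hke, Fin.val_castSucc, Fin.val_succ]
        omega
    · simp [hk_notMem hj]
  refine ⟨shiftPart k B, hZ.shiftPart_mem hclosed k (hZ.toMatrix_mem b hX) hk,
    isNilpotent_shiftPart k B, pow_ne_zero_of_mulVec_eq_succ
      (v := fun s ↦ Pi.single (e s) 1) (fun s ↦ ?_) (by simp)⟩
  ext i
  rw [mulVec_single_one, col_apply, shiftPart_apply, hBe]
  by_cases hi : i = e s.succ
  · subst hi
    rw [if_pos]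
    simp only [hke, Fin.val_castSucc, Fin.val_succ]
    omega
  · simp [hi]

theorem IsConjInvariantCone.natDegree_minpoly_le [Infinite K] (hZ : IsConjInvariantCone Z)
    (hclosed : IsClosed Z) {r : ℕ} (hnil : ∀ Y ∈ Z, IsNilpotent Y → Y ^ r = 0)
    {X : Matrix ι ι K} (hX : X ∈ Z) : (minpoly K X.toLin').natDegree ≤ r := by
  by_contra! hr
  obtain ⟨w, hw⟩ := exists_linearIndependent_pow_apply X.toLin'
  obtain ⟨Y, hYZ, hY, hYr⟩ := hZ.exists_isNilpotent_pow_ne_zero hclosed hX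
    (hw.comp (Fin.castLE hr) (Fin.castLE_injective hr))
  exact hYr (hnil Y hYZ hY)

theorem IsConjInvariantCone.diagonalizable_or_isNilpotent [IsAlgClosed K] [CharZero K]
    (hZ : IsConjInvariantCone Z) (hclosed : IsClosed Z)
    (hnil : ∀ Y ∈ Z, IsNilpotent Y → Y ^ 2 = 0) {X : Matrix ι ι K} (hX : X ∈ Z)
    (htrace : X.trace = 0) :
    (∃ (g : GL ι K) (d : ι → K),
      X = (g : Matrix ι ι K) * diagonal d * (↑g⁻¹ : Matrix ι ι K)) ∨ IsNilpotent X := by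
  rcases isSemisimple_or_isNilpotent_sub_algebraMap (hZ.natDegree_minpoly_le hclosed hnil hX)
    with hss | ⟨a, ha⟩
  · exact .inl (exists_conj_diagonal_of_isSemisimple hss)
  right
  rcases isEmpty_or_nonempty ι with hι | hι
  · exact ⟨1, Subsingleton.elim _ _⟩
  have hXa : IsNilpotent (X - algebraMap K (Matrix ι ι K) a) := by
    refine (IsNilpotent.map_iff (f := toLinAlgEquiv') toLinAlgEquiv'.injective).mp ?_
    rwa [map_sub, AlgEquiv.commutes]
  have htr : (X - algebraMap K (Matrix ι ι K) a).trace = 0 :=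
    (isNilpotent_trace_of_isNilpotent hXa).eq_zero
  have ha0 : a = 0 := by
    simpa [htrace, algebraMap_eq_diagonal, trace_diagonal] using htr
  simpa [ha0] using hXa

end Topology

end Cones

section Idempotents

variable {K V : Type*} [Field K] [AddCommGroup V] [Module K V] [FiniteDimensional K V]

theorem exists_submodule_between {A B : Submodule K V} (hAB : A ≤ B) {p : ℕ}
    (hA : finrank K A ≤ p) (hB : p ≤ finrank K B) :
    ∃ W : Submodule K V, A ≤ W ∧ W ≤ B ∧ finrank K W = p := by
  induction p, hA using Nat.le_induction with
  | base => exact ⟨A, le_rfl, hAB, rfl⟩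
  | succ p _ ih =>
    obtain ⟨W, hAW, hWB, hW⟩ := ih (by omega)
    obtain ⟨v, hvB, hvW⟩ := SetLike.exists_of_lt (hWB.lt_of_ne (by rintro rfl; omega))
    refine ⟨W ⊔ K ∙ v, hAW.trans le_sup_left, sup_le hWB ?_, ?_⟩
    · rwa [Submodule.span_singleton_le_iff_mem]
    · rw [Submodule.finrank_sup_span_singleton hvW, hW]

theorem exists_isIdempotentElem_mul_eq_zero {f : End K V} (hf : f * f = 0) {p : ℕ}
    (hp : finrank K (LinearMap.range f) ≤ p)
    (hp' : finrank K (LinearMap.range f) + p ≤ finrank K V) :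
    ∃ e : End K V, IsIdempotentElem e ∧ finrank K (LinearMap.range e) = p ∧
      e * f = f ∧ f * e = 0 := by
  have hle : LinearMap.range f ≤ LinearMap.ker f := LinearMap.range_le_ker_iff.mpr hf
  have hker := LinearMap.finrank_range_add_finrank_ker f
  obtain ⟨W, hfW, hWf, hW⟩ := exists_submodule_between hle hp (by omega)
  obtain ⟨C, hC⟩ := Submodule.exists_isCompl W
  have hrange : LinearMap.range (W.projection C hC) = W := Submodule.range_projection hC
  have he := Submodule.isIdempotentElem_projection hC
  refine ⟨W.projection C hC, he, by rw [hrange, hW],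
    (LinearMap.IsIdempotentElem.comp_eq_right_iff he f).mpr (by rwa [hrange]),
    LinearMap.range_le_ker_iff.mp (by rwa [hrange])⟩

theorem exists_conj_eq_of_isIdempotentElem {e e' : End K V} (he : IsIdempotentElem e)
    (he' : IsIdempotentElem e')
    (hrank : finrank K (LinearMap.range e) = finrank K (LinearMap.range e')) :
    ∃ φ : V ≃ₗ[K] V, φ.conj e = e' := by
  have hker : finrank K (LinearMap.ker e) = finrank K (LinearMap.ker e') := by
    have := LinearMap.finrank_range_add_finrank_ker e
    have := LinearMap.finrank_range_add_finrank_ker e'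
    omega
  have hproj := LinearMap.IsIdempotentElem.isProj_range e he
  have hproj' := LinearMap.IsIdempotentElem.isProj_range e' he'
  let φ : V ≃ₗ[K] V := (Submodule.prodEquivOfIsCompl _ _ hproj.isCompl).symm ≪≫ₗ
    (LinearEquiv.ofFinrankEq _ _ hrank).prodCongr (LinearEquiv.ofFinrankEq _ _ hker) ≪≫ₗ
    Submodule.prodEquivOfIsCompl _ _ hproj'.isCompl
  refine ⟨φ, ?_⟩
  rw [LinearEquiv.conj_apply, hproj.eq_conj_prod_map', hproj'.eq_conj_prod_map']
  ext x
  simp [φ]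

theorem one_add_smul_mul_mul_one_sub_smul {R A : Type*} [CommRing R] [Ring A] [Algebra R A]
    {x y : A} {a b : R} (hxx : x * x = 0) (hyx : y * x = a • x) (hxy : x * y = b • x) (s : R) :
    (1 + s • x) * y * (1 - s • x) = y + (s * (b - a)) • x := by
  simp only [add_mul, mul_sub, one_mul, mul_one, smul_mul_assoc, mul_smul_comm, hxy, hyx, hxx,
    smul_zero]
  module

variable {ι : Type*} [Fintype ι] [DecidableEq ι]

theorem exists_conj_mul_eq_self_and_mul_eq_zero {e X : Matrix ι ι K} (he : IsIdempotentElem e)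
    (hX : X * X = 0) (hrank : X.rank ≤ e.rank) (hrank' : X.rank + e.rank ≤ Fintype.card ι) :
    ∃ g : GL ι K, (g * e * g⁻¹ : Matrix ι ι K) * X = X ∧ X * (g * e * g⁻¹ : Matrix ι ι K) = 0 := by
  obtain ⟨f, hf, hfrank, hfX, hXf⟩ := exists_isIdempotentElem_mul_eq_zero
    (f := toLinAlgEquiv' X) (p := e.rank) (by rw [← map_mul, hX, map_zero]) hrank
    (by rwa [finrank_fintype_fun_eq_card])
  obtain ⟨φ, hφ⟩ := exists_conj_eq_of_isIdempotentElem (he.map toLinAlgEquiv') hf hfrank.symm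
  let g : GL ι K := ⟨LinearMap.toMatrix' φ, LinearMap.toMatrix' φ.symm,
    by rw [← LinearMap.toMatrix'_comp]; simp, by rw [← LinearMap.toMatrix'_comp]; simp⟩
  have hg : toLinAlgEquiv' (g * e * g⁻¹ : Matrix ι ι K) = f := by
    rw [map_mul, map_mul, ← hφ, LinearEquiv.conj_apply]
    change toLin' (LinearMap.toMatrix' _) * _ * toLin' (LinearMap.toMatrix' _) = _
    simp only [toLin'_toMatrix']
    rfl
  exact ⟨g, toLinAlgEquiv'.injective (by rw [map_mul, hg, hfX]),
    toLinAlgEquiv'.injective (by rw [map_mul, hg, hXf, map_zero])⟩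

end Idempotents

section ConjugacyCone

variable {K ι : Type*} [Fintype ι] [DecidableEq ι]

/-- The cone over the conjugacy class of `L`, without its vertex: all `t • (g * L * g⁻¹)` with
`t ≠ 0`. -/
def conjCone [CommRing K] (L : Matrix ι ι K) : Set (Matrix ι ι K) :=
  {X | ∃ t : K, t ≠ 0 ∧ ∃ g : GL ι K, X = t • ((g : Matrix ι ι K) * L * (↑g⁻¹ : Matrix ι ι K))}

variable [Field K]

theorem mem_closure_conjCone [TopologicalSpace K] [IsTopologicalRing K] [(𝓝[≠] (0 : K)).NeBot]
    {e X : Matrix ι ι K} (he : IsIdempotentElem e) {a b : K} (hab : a ≠ b) (hX : X * X = 0)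
    (hrank : X.rank ≤ e.rank) (hrank' : X.rank + e.rank ≤ Fintype.card ι) :
    X ∈ closure (conjCone (a • e + b • (1 - e))) := by
  obtain ⟨g, heX, hXe⟩ := exists_conj_mul_eq_self_and_mul_eq_zero he hX hrank hrank'
  let M : Matrix ι ι K := g * (a • e + b • (1 - e)) * g⁻¹
  have hM : M = a • (g * e * g⁻¹ : Matrix ι ι K) + b • (1 - g * e * g⁻¹ : Matrix ι ι K) := by
    simp [M, mul_add, add_mul, mul_sub, sub_mul]
  have hMX : M * X = a • X := by
    rw [hM, add_mul, smul_mul_assoc, smul_mul_assoc, sub_mul, heX]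
    simp
  have hXM : X * M = b • X := by
    rw [hM, mul_add, mul_smul_comm, mul_smul_comm, mul_sub, hXe]
    simp
  have hcurve : Continuous fun c : K ↦ c • M + X := by fun_prop
  suffices h : ∀ c : K, c ≠ 0 → c • M + X ∈ conjCone (a • e + b • (1 - e)) by
    simpa using apply_zero_mem_closure hcurve h
  intro c hc
  let s : K := (c * (b - a))⁻¹
  let U : GL ι K := ⟨1 + s • X, 1 - s • X, by simp [mul_sub, add_mul, hX],
    by simp [mul_add, sub_mul, hX]⟩
  refine ⟨c, hc, U * g, ?_⟩
  have hcs : c * (s * (b - a)) = 1 := by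
    have : b - a ≠ 0 := sub_ne_zero.mpr hab.symm
    simp only [s]
    field_simp
  calc c • M + X = c • ((1 + s • X) * M * (1 - s • X)) := by
        rw [one_add_smul_mul_mul_one_sub_smul hX hMX hXM, smul_add, smul_smul, hcs, one_smul]
    _ = c • ((U * g : GL ι K) * (a • e + b • (1 - e)) * ((U * g)⁻¹ : GL ι K)) := by
        simp [M, U, mul_assoc]

theorem exists_isIdempotentElem_of_conj_diagonal (g : GL ι K) (P : ι → Prop) [DecidablePred P]
    (a b : K) :
    ∃ e : Matrix ι ι K, IsIdempotentElem e ∧ e.rank = Fintype.card {i // P i} ∧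
      (g : Matrix ι ι K) * diagonal (fun i ↦ if P i then a else b) * (↑g⁻¹ : Matrix ι ι K) =
        a • e + b • (1 - e) := by
  classical
  let D : Matrix ι ι K := diagonal fun i ↦ if P i then 1 else 0
  have hD : D * D = D := by simp [D]
  have hdiag : diagonal (fun i ↦ if P i then a else b) = a • D + b • (1 - D) := by
    ext i j
    by_cases hij : i = j
    · subst hij
      by_cases hi : P i <;> simp [D, hi]
    · simp [D, hij]
  refine ⟨g * D * g⁻¹, ?_, ?_, ?_⟩
  · rw [IsIdempotentElem]
    simp only [mul_assoc, Units.inv_mul_cancel_left]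
    rw [← mul_assoc D D, hD]
  · rw [rank_mul_eq_left_of_isUnit_det _ _ (isUnits_det_units g⁻¹),
      rank_mul_eq_right_of_isUnit_det _ _ (isUnits_det_units g), rank_diagonal]
    simp
  · rw [hdiag]
    simp [mul_add, add_mul, mul_sub, sub_mul]

end ConjugacyCone

theorem stmt_2_general {K ι κ : Type*} [Field K] [IsAlgClosed K] [CharZero K] [TopologicalSpace K]
    [IsTopologicalRing K] [(𝓝[≠] (0 : K)).NeBot] [Fintype ι] [DecidableEq ι] {m : ℕ}
    {lam : κ → Matrix ι ι K}
    (hlam : ∃ (i : κ) (e : Matrix ι ι K) (a b : K), IsIdempotentElem e ∧ a ≠ b ∧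
      lam i = a • e + b • (1 - e) ∧ m ≤ e.rank ∧ m + e.rank ≤ Fintype.card ι)
    {Z : Set (Matrix ι ι K)} (hZ : IsConjInvariantCone Z) (hclosed : IsClosed Z)
    (htrace : ∀ X ∈ Z, X.trace = 0)
    (hdiag : ∀ X ∈ Z, (∃ (g : GL ι K) (d : ι → K),
        X = (g : Matrix ι ι K) * diagonal d * (↑g⁻¹ : Matrix ι ι K)) →
      ∃ (i : κ) (t : K) (g : GL ι K),
        X = t • ((g : Matrix ι ι K) * lam i * (↑g⁻¹ : Matrix ι ι K)))
    (hnil : ∀ X ∈ Z, IsNilpotent X → X * X = 0 ∧ X.rank ≤ m) :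
    (∀ X ∈ Z, (∃ (i : κ) (t : K) (g : GL ι K),
        X = t • ((g : Matrix ι ι K) * lam i * (↑g⁻¹ : Matrix ι ι K))) ∨
      (X * X = 0 ∧ X.rank ≤ m)) ∧
    Z ⊆ ⋃ i, closure (conjCone (lam i)) := by
  have hdichotomy (X : Matrix ι ι K) (hX : X ∈ Z) :=
    (hZ.diagonalizable_or_isNilpotent hclosed (fun Y hY hYnil ↦ sq Y ▸ (hnil Y hY hYnil).1) hX
      (htrace X hX)).imp (hdiag X hX) (hnil X hX)
  obtain ⟨i₀, e, a, b, he, hab, hi₀, hm, hm'⟩ := hlam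
  have hsquareZero {X : Matrix ι ι K} (hX : X * X = 0) (hXm : X.rank ≤ m) :
      X ∈ ⋃ i, closure (conjCone (lam i)) :=
    Set.mem_iUnion.mpr ⟨i₀, hi₀ ▸ mem_closure_conjCone he hab hX (hXm.trans hm) (by omega)⟩
  refine ⟨hdichotomy, fun X hX ↦ ?_⟩
  rcases hdichotomy X hX with ⟨i, t, g, rfl⟩ | ⟨hXX, hXm⟩
  · rcases eq_or_ne t 0 with rfl | ht
    · exact hsquareZero (by simp) (by simp)
    · exact Set.mem_iUnion.mpr ⟨i, subset_closure ⟨t, ht, g, rfl⟩⟩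
  · exact hsquareZero hXX hXm

theorem isClosed_of_zclosed {n : ℕ} {S : Set (Mat n)} (hS : zclosed S) : IsClosed S := by
  obtain ⟨T, rfl⟩ := hS
  simp only [Set.ofPred_forall]
  refine isClosed_biInter fun p _ ↦ isClosed_eq ?_ continuous_const
  exact p.continuous_eval.comp (by fun_prop)

theorem closure_subset_zclosure {n : ℕ} (S : Set (Mat n)) : closure S ⊆ zclosure S :=
  Set.subset_sInter fun _ hC ↦ closure_minimal hC.2 (isClosed_of_zclosed hC.1)

theorem stmt_2 (n m N : ℕ) (hn : 2 ≤ n) (hN : 1 ≤ N)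
    (lam : Fin N → Mat n)
    -- each `lam i` is a nonzero diagonalizable traceless matrix with exactly two distinct
    -- eigenvalues, whose smaller eigenvalue multiplicity equals `m`
    (hlam : ∀ i : Fin N, ∃ (p q : ℕ) (a b : ℂ) (g : GLn n),
      1 ≤ p ∧ 1 ≤ q ∧ p + q = n ∧ a ≠ b ∧ min p q = m ∧ (lam i).trace = 0 ∧
      lam i = (↑g : Mat n) * Matrix.diagonal (fun k : Fin n => if (k : ℕ) < p then a else b) *
        (↑g⁻¹ : Mat n))
    (Z : Set (Mat n))
    (hZsl : Z ⊆ {X : Mat n | X.trace = 0})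
    (hZclosed : zclosed Z)
    (hconj : ∀ g : GLn n, ∀ X ∈ Z, (↑g : Mat n) * X * (↑g⁻¹ : Mat n) ∈ Z)
    (hscal : ∀ c : ℂ, ∀ X ∈ Z, c • X ∈ Z)
    (hdiag : ∀ X ∈ Z, (∃ (g : GLn n) (d : Fin n → ℂ),
        X = (↑g : Mat n) * Matrix.diagonal d * (↑g⁻¹ : Mat n)) →
      ∃ (i : Fin N) (t : ℂ) (g : GLn n), X = t • ((↑g : Mat n) * lam i * (↑g⁻¹ : Mat n)))
    (hnil : ∀ X ∈ Z, IsNilpotent X → X * X = 0 ∧ X.rank ≤ m) :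
    (∀ X ∈ Z, (∃ (i : Fin N) (t : ℂ) (g : GLn n),
        X = t • ((↑g : Mat n) * lam i * (↑g⁻¹ : Mat n))) ∨
      (X * X = 0 ∧ X.rank ≤ m)) ∧
    Z ⊆ ⋃ i : Fin N, zclosure {X | ∃ t : ℂ, t ≠ 0 ∧ ∃ g : GLn n,
      X = t • ((↑g : Mat n) * lam i * (↑g⁻¹ : Mat n))} := by
  have hlam₀ : ∃ (i : Fin N) (e : Mat n) (a b : ℂ), IsIdempotentElem e ∧ a ≠ b ∧
      lam i = a • e + b • (1 - e) ∧ m ≤ e.rank ∧ m + e.rank ≤ Fintype.card (Fin n) := by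
    obtain ⟨p, q, a, b, g, -, -, hpq, hab, hm, -, hlam₀⟩ := hlam ⟨0, hN⟩
    obtain ⟨e, he, hrank, hconj⟩ :=
      exists_isIdempotentElem_of_conj_diagonal g (fun k : Fin n ↦ (k : ℕ) < p) a b
    have hcard : Fintype.card {k : Fin n // (k : ℕ) < p} = p := by
      rw [Fintype.card_subtype, Fin.card_filter_val_lt]; omega
    exact ⟨⟨0, hN⟩, e, a, b, he, hab, hlam₀.trans hconj, by omega,
      by rw [Fintype.card_fin]; omega⟩
  obtain ⟨hdichotomy, hsubset⟩ := stmt_2_general hlam₀ ⟨hconj, hscal⟩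
    (isClosed_of_zclosed hZclosed) hZsl hdiag hnil
  exact ⟨hdichotomy, hsubset.trans (Set.iUnion_mono fun _ ↦ closure_subset_zclosure _)⟩
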